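/- Let α_x ≥ 0, α_p > 0, σ_μ ≥ 0, set α = α_x + α_p and α_ψ = α²/(α_x + α_p²·σ_μ²). If √(α_x/α_p² + σ_μ²) ≥ 1/√(2π), then for every x_c ∈ ℝ and every m ∈ ℝ, the equation Φ(√α_ψ·(−x_c/√α + (α_p/α)·θ − (α_p/α)·m)) = θ has exactly one real solution θ*, and θ* ∈ (0,1). -/

import Mathlib

/-- The standard normal cumulative distribution function. -/
noncomputable def stdNormalCDF (x : ℝ) : ℝ :=
  ∫ t in Set.Iic x, (Real.sqrt (2 * Real.pi))⁻¹ * Real.exp (-t ^ 2 / 2)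

theorem aux_cont : Continuous (fun t : ℝ => (Real.sqrt (2 * Real.pi))⁻¹ * Real.exp (-t ^ 2 / 2)) := by
  fun_prop

theorem aux_eq : (fun t : ℝ => (Real.sqrt (2 * Real.pi))⁻¹ * Real.exp (-t ^ 2 / 2))
    = fun t : ℝ => (Real.sqrt (2 * Real.pi))⁻¹ * Real.exp (-(1/2) * t ^ 2) := by
  funext t
  congr 2
  ring

theorem aux_int : MeasureTheory.Integrable
    (fun t : ℝ => (Real.sqrt (2 * Real.pi))⁻¹ * Real.exp (-t ^ 2 / 2)) := by
  rw [aux_eq]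
  exact (integrable_exp_neg_mul_sq (by norm_num)).const_mul _

theorem aux_total :
    ∫ t : ℝ, (Real.sqrt (2 * Real.pi))⁻¹ * Real.exp (-t ^ 2 / 2) = 1 := by
  rw [aux_eq, MeasureTheory.integral_const_mul, integral_gaussian]
  have : Real.pi / (1/2) = 2 * Real.pi := by ring
  rw [this]
  exact inv_mul_cancel₀ (by positivity)

theorem aux_pos (s : Set ℝ) (h0 : MeasureTheory.volume s ≠ 0) :
    0 < ∫ t in s, (Real.sqrt (2 * Real.pi))⁻¹ * Real.exp (-t ^ 2 / 2) := by
  rw [MeasureTheory.integral_pos_iff_support_of_nonneg (fun t => by positivity)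
    aux_int.integrableOn]
  have : Function.support (fun t : ℝ => (Real.sqrt (2 * Real.pi))⁻¹ * Real.exp (-t ^ 2 / 2))
      = Set.univ := by
    ext t
    simp only [Function.mem_support, Set.mem_univ, iff_true]
    positivity
  rw [this]
  simpa [pos_iff_ne_zero] using h0

theorem aux_cdf_pos (x : ℝ) : 0 < stdNormalCDF x := aux_pos _ (by simp)

theorem aux_cdf_lt (x : ℝ) : stdNormalCDF x < 1 := by
  have h1 := aux_pos (Set.Ioi x) (by simp)
  have h2 := intervalIntegral.integral_Iic_add_Ioi (b := x) aux_int.integrableOn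
    aux_int.integrableOn
  rw [aux_total] at h2
  unfold stdNormalCDF
  linarith

theorem aux_sub (a b : ℝ) : stdNormalCDF b - stdNormalCDF a
    = ∫ t in a..b, (Real.sqrt (2 * Real.pi))⁻¹ * Real.exp (-t ^ 2 / 2) :=
  intervalIntegral.integral_Iic_sub_Iic aux_int.integrableOn aux_int.integrableOn

theorem aux_continuous : Continuous stdNormalCDF := by
  have h : stdNormalCDF = fun b => stdNormalCDF 0 +
      ∫ t in (0:ℝ)..b, (Real.sqrt (2 * Real.pi))⁻¹ * Real.exp (-t ^ 2 / 2) := by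
    funext b
    rw [← aux_sub]
    ring
  rw [h]
  exact continuous_const.add
    (intervalIntegral.continuous_primitive (fun a b => aux_int.intervalIntegrable) 0)

theorem aux_strict (a b : ℝ) (hab : a < b) :
    stdNormalCDF b - stdNormalCDF a < (Real.sqrt (2 * Real.pi))⁻¹ * (b - a) := by
  rw [aux_sub]
  have hc : (Real.sqrt (2 * Real.pi))⁻¹ * (b - a)
      = ∫ _t in a..b, (Real.sqrt (2 * Real.pi))⁻¹ := by
    rw [intervalIntegral.integral_const, smul_eq_mul, mul_comm]
  rw [hc]
  have hp : 0 < (Real.sqrt (2 * Real.pi))⁻¹ := by positivity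
  apply intervalIntegral.integral_lt_integral_of_continuousOn_of_le_of_exists_lt hab
    aux_cont.continuousOn continuousOn_const
  · intro t _
    have : Real.exp (-t ^ 2 / 2) ≤ 1 := Real.exp_le_one_iff.2 (by nlinarith [sq_nonneg t])
    exact mul_le_of_le_one_right hp.le this
  · have key : ∀ t : ℝ, t ≠ 0 → (Real.sqrt (2 * Real.pi))⁻¹ * Real.exp (-t ^ 2 / 2)
        < (Real.sqrt (2 * Real.pi))⁻¹ := by
      intro t ht
      have h2 : 0 < t ^ 2 := by positivity
      exact mul_lt_of_lt_one_right hp (Real.exp_lt_one_iff.2 (by linarith))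
    by_cases ha : a = 0
    · exact ⟨b, ⟨hab.le, le_rfl⟩, key b (by rw [ha] at hab; exact hab.ne')⟩
    · exact ⟨a, ⟨le_rfl, hab.le⟩, key a ha⟩

theorem aux_main (A k : ℝ) (hk : 0 < k) (hk2 : k ≤ Real.sqrt (2 * Real.pi)) :
    ∃ θ ∈ Set.Ioo (0 : ℝ) 1, stdNormalCDF (A + k * θ) = θ ∧
      ∀ θ' : ℝ, stdNormalCDF (A + k * θ') = θ' → θ' = θ := by
  have hs : 0 < Real.sqrt (2 * Real.pi) := by positivity
  have key : ∀ x y : ℝ, x < y → stdNormalCDF (A + k * x) = x →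
      stdNormalCDF (A + k * y) = y → False := by
    intro x y hxy hx hy
    have h1 := aux_strict (A + k * x) (A + k * y) (by nlinarith)
    rw [hx, hy] at h1
    have h2 : (Real.sqrt (2 * Real.pi))⁻¹ * k ≤ 1 := by
      rw [inv_mul_le_iff₀ hs]; linarith
    nlinarith
  have hcont : ContinuousOn (fun θ : ℝ => θ - stdNormalCDF (A + k * θ)) (Set.Icc 0 1) :=
    (continuous_id.sub (aux_continuous.comp (by fun_prop))).continuousOn
  obtain ⟨θ, _, hθ⟩ := intermediate_value_Icc (zero_le_one' ℝ) hcont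
    (show (0:ℝ) ∈ _ from ⟨by have := aux_cdf_pos (A + k * 0); linarith,
      by have := aux_cdf_lt (A + k * 1); linarith⟩)
  have hθ' : stdNormalCDF (A + k * θ) = θ := by
    have : θ - stdNormalCDF (A + k * θ) = 0 := hθ
    linarith
  refine ⟨θ, ⟨?_, ?_⟩, hθ', ?_⟩
  · have := aux_cdf_pos (A + k * θ); linarith
  · have := aux_cdf_lt (A + k * θ); linarith
  · intro y hy
    rcases lt_trichotomy y θ with h | h | h
    · exact (key _ _ h hy hθ').elim
    · exact h
    · exact (key _ _ h hθ' hy).elim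

theorem stmt_2 (αx αp σμ : ℝ) (hαx : 0 ≤ αx) (hαp : 0 < αp) (hσμ : 0 ≤ σμ)
    (α αψ : ℝ) (hα : α = αx + αp) (hαψ : αψ = α ^ 2 / (αx + αp ^ 2 * σμ ^ 2))
    (h : Real.sqrt (αx / αp ^ 2 + σμ ^ 2) ≥ 1 / Real.sqrt (2 * Real.pi)) :
    ∀ xc m : ℝ,
      ∃ θ ∈ Set.Ioo (0 : ℝ) 1,
        stdNormalCDF (Real.sqrt αψ *
          (-xc / Real.sqrt α + (αp / α) * θ - (αp / α) * m)) = θ ∧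
        ∀ θ' : ℝ,
          stdNormalCDF (Real.sqrt αψ *
            (-xc / Real.sqrt α + (αp / α) * θ' - (αp / α) * m)) = θ' → θ' = θ := by
  intro xc m
  have hα0 : 0 < α := by linarith
  have hs : 0 < Real.sqrt (2 * Real.pi) := by positivity
  set S := Real.sqrt (αx / αp ^ 2 + σμ ^ 2) with hS
  have hS0 : 0 < S := lt_of_lt_of_le (by positivity) h
  have hD : αx + αp ^ 2 * σμ ^ 2 = (αp * S) ^ 2 := by
    rw [mul_pow, hS, Real.sq_sqrt (by positivity)]
    field_simp
  have hψ : Real.sqrt αψ = α / (αp * S) := by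
    rw [hαψ, hD, ← div_pow, Real.sqrt_sq (by positivity)]
  have hk : Real.sqrt αψ * (αp / α) = 1 / S := by
    rw [hψ]; field_simp
  have := aux_main (Real.sqrt αψ * (-xc / Real.sqrt α - (αp / α) * m)) (1 / S) (by positivity)
    (by rw [ge_iff_le, div_le_iff₀ hs] at h; rw [div_le_iff₀ hS0]; linarith)
  have e : ∀ θ : ℝ, Real.sqrt αψ * (-xc / Real.sqrt α + (αp / α) * θ - (αp / α) * m)
      = Real.sqrt αψ * (-xc / Real.sqrt α - (αp / α) * m) + 1 / S * θ := by
    intro θ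
    rw [← hk]; ring
  simp only [e]
  exact this
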